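/- Let R be a commutative ring, n ≥ 1, and A an n×n matrix over R with characteristic polynomial coefficients c_i and Faddeev–Leverrier matrices B_k (B_0 = I, B_k = A·B_{k-1} + c_{n-k}·I). Then for every k with 1 ≤ k ≤ n, k·c_{n−k} = −Tr(A·B_{k−1}). (This is the trace-extraction step of the Faddeev–Leverrier algorithm in multiplied, division-free form.) -/

import Mathlib

noncomputable def flSeq {R : Type*} [CommRing R] {n : ℕ}
    (A : Matrix (Fin n) (Fin n) R) : ℕ → Matrix (Fin n) (Fin n) R
  | 0 => 1
  | k + 1 => A * flSeq A k + (A.charpoly.coeff (n - (k + 1))) • 1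

/-!
Since `(xI - A) adj(xI - A) = p_A(x) I`, the adjugate of `xI - A` is the quotient of `p_A(x) I` by
`xI - A` over the matrix ring, so synthetic division identifies `B_k` with its coefficient at
`x ^ (n - 1 - k)`. Jacobi's formula gives `p_A' = Tr (adj(xI - A))`. Taking traces in the first
identity therefore yields `Tr (A adj(xI - A)) = x p_A' - n p_A`, and the claim is the coefficient
of `x ^ (n - k)`.
-/

section

open Polynomial Matrix

section Jacobi

variable {S B ι : Type*} [CommSemiring S] [DecidableEq ι]

theorem derivation_prod [CommSemiring B] [Algebra S B] {M : Type*} [AddCommMonoid M] [Module B M]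
    [Module S M] (D : Derivation S B M) (s : Finset ι) (f : ι → B) :
    D (∏ i ∈ s, f i) = ∑ i ∈ s, (∏ j ∈ s.erase i, f j) • D (f i) := by
  induction s using Finset.induction_on with
  | empty => simp
  | insert a s ha ih =>
    have prod_erase : ∀ i ∈ s, ∏ j ∈ (insert a s).erase i, f j = f a * ∏ j ∈ s.erase i, f j := by
      intro i hi
      have hai : a ≠ i := (ne_of_mem_of_not_mem hi ha).symm
      rw [Finset.erase_insert_of_ne hai,
        Finset.prod_insert fun h => ha (Finset.mem_of_mem_erase h)]
    rw [Finset.prod_insert ha, D.leibniz, ih, Finset.sum_insert ha, Finset.erase_insert ha,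
      Finset.smul_sum, add_comm]
    congr 1
    exact Finset.sum_congr rfl fun i hi => by rw [prod_erase i hi, mul_smul]

variable [CommRing B] [Algebra S B] [Fintype ι]

theorem derivation_det (D : Derivation S B B) (M : Matrix ι ι B) :
    D M.det = ∑ j, (M.updateCol j fun i => D (M i j)).det := by
  simp only [det_apply, map_sum, Units.smul_def, map_zsmul, derivation_prod, Finset.smul_sum]
  rw [Finset.sum_comm]
  refine Finset.sum_congr rfl fun j _ => Finset.sum_congr rfl fun σ _ => ?_
  rw [← Finset.prod_erase_mul _ _ (Finset.mem_univ j), updateCol_self, smul_eq_mul]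
  congr 2
  exact Finset.prod_congr rfl fun i hi => (updateCol_ne (Finset.ne_of_mem_erase hi)).symm

theorem derivation_det_eq_trace_adjugate_mul (D : Derivation S B B) (M : Matrix ι ι B) :
    D M.det = trace (adjugate M * M.map D) := by
  rw [derivation_det]
  refine Finset.sum_congr rfl fun j _ => ?_
  rw [← cramer_apply, cramer_eq_adjugate_mulVec]
  rfl

end Jacobi

theorem trace_coeff_matPolyEquiv {R ι : Type*} [CommSemiring R] [Fintype ι] [DecidableEq ι]
    (M : Matrix ι ι R[X]) (m : ℕ) :
    trace ((matPolyEquiv M).coeff m) = (trace M).coeff m := by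
  simp [trace, matPolyEquiv_coeff_apply]

section Adjugate

variable {R ι : Type*} [CommRing R] [Fintype ι] [DecidableEq ι]

theorem map_derivative_charmatrix (A : Matrix ι ι R) : (charmatrix A).map derivative = 1 := by
  ext1 i j
  obtain rfl | hij := eq_or_ne i j
  · simp
  · simp [hij]

theorem derivative_charpoly_eq_trace_adjugate (A : Matrix ι ι R) :
    derivative A.charpoly = trace (adjugate (charmatrix A)) := by
  have jacobi := derivation_det_eq_trace_adjugate_mul (derivative' (R := R)) (charmatrix A)
  have map_derivative' : (charmatrix A).map derivative' = 1 := map_derivative_charmatrix A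
  rwa [map_derivative', mul_one] at jacobi

theorem trace_map_C_mul_adjugate_charmatrix (A : Matrix ι ι R) :
    trace (A.map C * adjugate (charmatrix A)) =
      X * derivative A.charpoly - (Fintype.card ι : R[X]) * A.charpoly := by
  have map_C_eq : A.map C = scalar ι X - charmatrix A := by simp [charmatrix]
  rw [map_C_eq, sub_mul, mul_adjugate, trace_sub, trace_smul, trace_one, scalar_apply,
    ← smul_eq_diagonal_mul, trace_smul, derivative_charpoly_eq_trace_adjugate, Matrix.charpoly,
    smul_eq_mul, smul_eq_mul, mul_comm (Fintype.card ι : R[X])]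

/-- The adjugate of `xI - A`, encoded as a polynomial in `x` with matrix coefficients. The
Faddeev–Leverrier matrices of `A` are these coefficients, read from the top. -/
noncomputable def adjugatePolynomial (A : Matrix ι ι R) : (Matrix ι ι R)[X] :=
  matPolyEquiv (adjugate (charmatrix A))

theorem adjugatePolynomial_eq_divByMonic (A : Matrix ι ι R) :
    adjugatePolynomial A = A.charpoly.map (algebraMap R (Matrix ι ι R)) /ₘ (X - C A) := by
  have factorization :
      (X - C A) * adjugatePolynomial A = A.charpoly.map (algebraMap R (Matrix ι ι R)) := by
    rw [adjugatePolynomial, ← matPolyEquiv_charmatrix, ← map_mul, mul_adjugate, ← Matrix.charpoly,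
      matPolyEquiv_smul_one]
  rw [← factorization, mul_divByMonic_cancel_left _ (monic_X_sub_C A)]

theorem coeff_adjugatePolynomial_rec (A : Matrix ι ι R) (m : ℕ) :
    (adjugatePolynomial A).coeff m =
      A * (adjugatePolynomial A).coeff (m + 1) + A.charpoly.coeff (m + 1) • 1 := by
  rw [adjugatePolynomial_eq_divByMonic, coeff_divByMonic_X_sub_C_rec, coeff_map,
    Algebra.algebraMap_eq_smul_one, add_comm]

theorem coeff_card_adjugatePolynomial (A : Matrix ι ι R) :
    (adjugatePolynomial A).coeff (Fintype.card ι) = 0 := by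
  nontriviality R
  have natDegree_le : (A.charpoly.map (algebraMap R (Matrix ι ι R))).natDegree ≤ Fintype.card ι :=
    natDegree_map_le.trans A.charpoly_natDegree_eq_dim.le
  rw [adjugatePolynomial_eq_divByMonic, coeff_divByMonic_X_sub_C,
    Finset.Icc_eq_empty (by lia), Finset.sum_empty]

theorem charpoly_coeff_card (A : Matrix ι ι R) : A.charpoly.coeff (Fintype.card ι) = 1 := by
  nontriviality R
  rw [← A.charpoly_natDegree_eq_dim, A.charpoly_monic.coeff_natDegree]

theorem trace_mul_coeff_adjugatePolynomial (A : Matrix ι ι R) (m : ℕ) :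
    trace (A * (adjugatePolynomial A).coeff m) =
      ((m : R) - Fintype.card ι) * A.charpoly.coeff m := by
  rw [adjugatePolynomial, ← coeff_C_mul, ← matPolyEquiv_map_C, ← map_mul, trace_coeff_matPolyEquiv,
    trace_map_C_mul_adjugate_charmatrix]
  cases m with
  | zero => simp
  | succ m =>
    simp only [coeff_sub, coeff_X_mul, coeff_derivative, coeff_natCast_mul, Nat.cast_add_one]
    ring

end Adjugate

theorem flSeq_eq_coeff_adjugatePolynomial {R : Type*} [CommRing R] {n : ℕ}
    (A : Matrix (Fin n) (Fin n) R) {k : ℕ} (hk : k < n) :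
    flSeq A k = (adjugatePolynomial A).coeff (n - (k + 1)) := by
  induction k with
  | zero =>
    have top_coeff := coeff_card_adjugatePolynomial A
    have leading_coeff := charpoly_coeff_card A
    rw [Fintype.card_fin] at top_coeff leading_coeff
    rw [coeff_adjugatePolynomial_rec, zero_add, Nat.sub_add_cancel hk, top_coeff, leading_coeff,
      mul_zero, zero_add, one_smul, flSeq]
  | succ k ih =>
    rw [coeff_adjugatePolynomial_rec, show n - (k + 1 + 1) + 1 = n - (k + 1) by lia,
      ← ih (by lia), flSeq]

end

theorem stmt3 {R : Type*} [CommRing R] {n : ℕ} (hn : 1 ≤ n)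
    (A : Matrix (Fin n) (Fin n) R) :
    ∀ k, 1 ≤ k → k ≤ n →
      (k : R) * A.charpoly.coeff (n - k) = - Matrix.trace (A * flSeq A (k - 1)) := by
  intro k hk hkn
  rw [flSeq_eq_coeff_adjugatePolynomial A (by lia), Nat.sub_add_cancel hk,
    trace_mul_coeff_adjugatePolynomial, Fintype.card_fin, Nat.cast_sub hkn]
  ring
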